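/- Let d ≥ 2 and λ ∈ [0,1). Define V : H₊ → ℝ by V(x) = F(T x) − F(x*). Then there exists a class-KL function β such that for every x ∈ H₊ and every n ∈ ℕ, V(T^n x) ≤ β(V(x), n). -/

import Mathlib

noncomputable section

open Metric Set Filter

/-- Euclidean space `ℝ^d` with `d = d' + 2 ≥ 2`. -/
abbrev Euc (d : ℕ) := EuclideanSpace ℝ (Fin (d + 2))

/-- The standard basis vectors. -/
def e (d : ℕ) (j : Fin (d + 2)) : Euc d := EuclideanSpace.single j 1

/-- The Douglas–Rachford operator for the unit sphere and the line
`L_λ = {t e₁ + λ e₂}`, given by its explicit formula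
`T x = (x₁/‖x‖) e₁ + ((1 − 1/‖x‖) x₂ + λ) e₂ + (1 − 1/‖x‖) ∑_{j=3}^d x_j e_j`. -/
def DR (d : ℕ) (lam : ℝ) (x : Euc d) : Euc d :=
  (x 0 / ‖x‖) • e d 0 + ((1 - 1 / ‖x‖) * x 1 + lam) • e d 1 +
    ∑ j ∈ Finset.univ.filter (fun j : Fin (d + 2) => 2 ≤ (j : ℕ)),
      ((1 - 1 / ‖x‖) * x j) • e d j

/-- The intersection point `x* = √(1−λ²) e₁ + λ e₂`. -/
def xStar (d : ℕ) (lam : ℝ) : Euc d := Real.sqrt (1 - lam ^ 2) • e d 0 + lam • e d 1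

/-- The Lyapunov-type function of Benoist:
`F(x) = ½‖x − λe₂‖² − λ log(1 + √(1 − x₁²)) + λ√(1 − x₁²) + (λ−1) log x₁`. -/
def F (d : ℕ) (lam : ℝ) (x : Euc d) : ℝ :=
  (1 / 2) * ‖x - lam • e d 1‖ ^ 2 - lam * Real.log (1 + Real.sqrt (1 - (x 0) ^ 2)) +
    lam * Real.sqrt (1 - (x 0) ^ 2) + (lam - 1) * Real.log (x 0)

/-- `Δ = {x : 0 < x₁ ≤ 1}`. -/
def Delta (d : ℕ) : Set (Euc d) := {x | 0 < x 0 ∧ x 0 ≤ 1}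

/-- `H₊ = {x : x₁ > 0}`. -/
def Hplus (d : ℕ) : Set (Euc d) := {x | 0 < x 0}

/-- `V(x) = F(T x) − F(x*)` on `H₊`. -/
def V (d : ℕ) (lam : ℝ) (x : Euc d) : ℝ := F d lam (DR d lam x) - F d lam (xStar d lam)

/-- A function `β : [0,∞) × [0,∞) → [0,∞)` is of class `KL` if for every `t ≥ 0` the map
`s ↦ β(s,t)` is continuous, strictly increasing and `β(0,t) = 0`, and for every `s ≥ 0` the
map `t ↦ β(s,t)` is non-increasing and tends to `0` as `t → ∞`. -/
def IsClassKL (β : ℝ → ℝ → ℝ) : Prop :=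
  (∀ s t : ℝ, 0 ≤ s → 0 ≤ t → 0 ≤ β s t) ∧
  (∀ t : ℝ, 0 ≤ t → ContinuousOn (fun s => β s t) (Ici 0)) ∧
  (∀ t : ℝ, 0 ≤ t → StrictMonoOn (fun s => β s t) (Ici 0)) ∧
  (∀ t : ℝ, 0 ≤ t → β 0 t = 0) ∧
  (∀ s : ℝ, 0 ≤ s → AntitoneOn (fun t => β s t) (Ici 0)) ∧
  (∀ s : ℝ, 0 ≤ s → Tendsto (fun t => β s t) atTop (nhds 0))

/-! ### One-variable analysis -/

lemma mono_aux {f f' : ℝ → ℝ} {a b : ℝ} (hab : a ≤ b)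
    (hd : ∀ x ∈ Icc a b, HasDerivAt f (f' x) x) (hn : ∀ x ∈ Icc a b, 0 ≤ f' x) : f a ≤ f b := by
  have : MonotoneOn f (Icc a b) := by
    apply monotoneOn_of_hasDerivWithinAt_nonneg (convex_Icc a b) (f' := f')
    · exact fun x hx => (hd x hx).continuousAt.continuousWithinAt
    · exact fun x hx => (hd x (interior_subset hx)).hasDerivWithinAt
    · exact fun x hx => hn x (interior_subset hx)
  exact this (left_mem_Icc.2 hab) (right_mem_Icc.2 hab) hab

lemma smono_aux {f f' : ℝ → ℝ} {a b : ℝ} (hab : a < b)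
    (hd : ∀ x ∈ Icc a b, HasDerivAt f (f' x) x) (hn : ∀ x ∈ Ioo a b, 0 < f' x) : f a < f b := by
  have : StrictMonoOn f (Icc a b) := by
    apply strictMonoOn_of_hasDerivWithinAt_pos (convex_Icc a b) (f' := f')
    · exact fun x hx => (hd x hx).continuousAt.continuousWithinAt
    · exact fun x hx => (hd x (interior_subset hx)).hasDerivWithinAt
    · intro x hx
      rw [interior_Icc] at hx
      exact hn x hx
  exact this (left_mem_Icc.2 hab.le) (right_mem_Icc.2 hab.le) hab

def GG (l s : ℝ) : ℝ :=
  (1 / 2) * (1 - s ^ 2) + l * s - (l + 1) / 2 * Real.log (1 + s) - (1 - l) / 2 * Real.log (1 - s)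

lemma GG_deriv (l s : ℝ) (hs : 0 ≤ s) (hs1 : s < 1) :
    HasDerivAt (GG l) ((s - l) * s ^ 2 / (1 - s ^ 2)) s := by
  have h1 : HasDerivAt (fun s : ℝ => Real.log (1 + s)) (1 / (1 + s)) s := by
    have := ((hasDerivAt_id s).const_add 1).log (by simp; linarith)
    simpa using this
  have h2 : HasDerivAt (fun s : ℝ => Real.log (1 - s)) (-1 / (1 - s)) s := by
    have := ((hasDerivAt_id s).const_sub 1).log (by simp; linarith)
    simpa using this
  have h3 : HasDerivAt (fun s : ℝ => (1 / 2) * (1 - s ^ 2) + l * s) (-s + l) s := by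
    have h4 : HasDerivAt (fun s : ℝ => s ^ 2) (2 * s) s := by simpa using hasDerivAt_pow 2 s
    refine (((h4.const_sub 1).const_mul (1 / 2 : ℝ)).add
      ((hasDerivAt_id s).const_mul l)).congr_deriv ?_
    ring
  have := (h3.sub (h1.const_mul ((l + 1) / 2))).sub (h2.const_mul ((1 - l) / 2))
  refine this.congr_deriv ?_
  have a1 : 1 - s ≠ 0 := by linarith
  have a2 : 1 + s ≠ 0 := by linarith
  have a3 : 1 - s ^ 2 ≠ 0 := by
    have : 1 - s ^ 2 = (1 - s) * (1 + s) := by ring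
    rw [this]; positivity
  field_simp
  ring

lemma GG_min {l s : ℝ} (h0 : 0 ≤ l) (h1 : l < 1) (hs : 0 ≤ s) (hs1 : s < 1) (hne : s ≠ l) :
    GG l l < GG l s := by
  rcases lt_or_gt_of_ne hne with h | h
  · have := smono_aux (f := fun v => - GG l v) (f' := fun v => -((v - l) * v ^ 2 / (1 - v ^ 2))) h
      (fun x hx => (GG_deriv l x (hs.trans hx.1) (hx.2.trans_lt h1)).neg)
      (fun x hx => by
        have e1 : 0 < x := hs.trans_lt hx.1
        have e2 : 0 < l - x := by linarith [hx.2]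
        have e3 : 0 < 1 - x ^ 2 := by nlinarith [hx.2]
        have : -((x - l) * x ^ 2 / (1 - x ^ 2)) = (l - x) * x ^ 2 / (1 - x ^ 2) := by ring
        rw [this]; positivity)
    linarith
  · exact smono_aux (f := GG l) h
      (fun x hx => (GG_deriv l x (h0.trans hx.1) (hx.2.trans_lt hs1)))
      (fun x hx => by
        have e1 : 0 < x := h0.trans_lt hx.1
        have e2 : 0 < x - l := by linarith [hx.1]
        have e3 : 0 < 1 - x ^ 2 := by nlinarith [hx.2]
        positivity)

/-- `P(t) = t / √(1-t²)` -/
def pp (t : ℝ) : ℝ := t / Real.sqrt (1 - t ^ 2)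

def Ph (l t s : ℝ) : ℝ :=
  GG l s - GG l t + (l - t) * t * (1 - Real.sqrt (1 - s ^ 2) / Real.sqrt (1 - t ^ 2))

lemma sq_pos_aux {s : ℝ} (hs : 0 ≤ s) (hs1 : s < 1) : 0 < 1 - s ^ 2 := by nlinarith

lemma Ph_self (l t : ℝ) (ht : 0 ≤ t) (ht1 : t < 1) : Ph l t t = 0 := by
  have := Real.sqrt_pos.2 (sq_pos_aux ht ht1)
  unfold Ph
  rw [div_self this.ne']; ring

lemma pp_sq {s : ℝ} (hs : 0 ≤ s) (hs1 : s < 1) : s ^ 2 / (1 - s ^ 2) = pp s ^ 2 := by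
  unfold pp
  rw [div_pow, Real.sq_sqrt (sq_pos_aux hs hs1).le]

lemma pp_mono {s t : ℝ} (hs : 0 ≤ s) (hst : s ≤ t) (ht1 : t < 1) : pp s ≤ pp t := by
  unfold pp
  have := Real.sqrt_pos.2 (sq_pos_aux (hs.trans hst) ht1)
  apply div_le_div₀ (hs.trans hst) hst this
  apply Real.sqrt_le_sqrt
  nlinarith

lemma pp_nonneg {s : ℝ} (hs : 0 ≤ s) : 0 ≤ pp s := div_nonneg hs (Real.sqrt_nonneg _)

lemma Ph_deriv (l t s : ℝ) (hs : 0 ≤ s) (hs1 : s < 1) :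
    HasDerivAt (Ph l t) ((s - l) * pp s ^ 2 + (l - t) * pp t * pp s) s := by
  have h1 := GG_deriv l s hs hs1
  have hp := sq_pos_aux hs hs1
  have h2 : HasDerivAt (fun s : ℝ => Real.sqrt (1 - s ^ 2)) (- pp s) s := by
    have h4 : HasDerivAt (fun s : ℝ => s ^ 2) (2 * s) s := by simpa using hasDerivAt_pow 2 s
    refine ((h4.const_sub 1).sqrt hp.ne').congr_deriv ?_
    have := Real.sqrt_pos.2 hp
    unfold pp
    field_simp
  have := (h1.sub_const (GG l t)).add
    (((h2.div_const (Real.sqrt (1 - t ^ 2))).const_sub 1).const_mul ((l - t) * t))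
  refine this.congr_deriv ?_
  rw [mul_div_assoc, pp_sq hs hs1]
  simp only [pp]
  ring

/-- case `l ≤ t` -/
lemma case_a {l t s : ℝ} (h0 : 0 ≤ l) (hlt : l ≤ t) (ht1 : t < 1) (hs : 0 ≤ s) (hs1 : s < 1) :
    0 ≤ Ph l t s := by
  have ht := h0.trans hlt
  rw [← Ph_self l t ht ht1]
  rcases le_total t s with h | h
  · apply mono_aux h (fun x hx => Ph_deriv l t x (ht.trans hx.1) (hx.2.trans_lt hs1))
    intro x hx
    have a := pp_mono ht hx.1 (hx.2.trans_lt hs1)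
    have b := pp_nonneg ht
    have c : (t - l) * pp t ≤ (x - l) * pp x :=
      mul_le_mul (by linarith [hx.1]) a b (by linarith [hx.1])
    nlinarith
  · have := mono_aux (f := fun v => - Ph l t v) h
      (fun x hx => (Ph_deriv l t x (hs.trans hx.1) (hx.2.trans_lt ht1)).neg) ?_
    · linarith
    intro x hx
    have hx0 := hs.trans hx.1
    have a := pp_mono hx0 hx.2 ht1
    have b := pp_nonneg hx0
    have c : (x - l) * pp x ≤ (t - l) * pp t := by
      rcases le_total x l with h | h
      · have := mul_nonneg (sub_nonneg.2 h) b
        have := mul_nonneg (sub_nonneg.2 hlt) (b.trans a)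
        nlinarith
      · exact mul_le_mul (by linarith [hx.2]) a b (by linarith [hx.2])
    nlinarith

lemma case_b {l t s : ℝ} (ht : 0 ≤ t) (htl : t < l) (h1 : l < 1) (hts : t ≤ s) (hsl : s ≤ l) :
    0 < Ph l t s + (1 / 2) * (t - l) ^ 2 := by
  have hs := ht.trans hts
  have hs1 := hsl.trans_lt h1
  have ht1 := htl.trans h1
  rcases hts.eq_or_lt with h | hts'
  · rw [← h, Ph_self l t ht ht1]
    nlinarith
  obtain ⟨r, hr⟩ : ∃ r, r = (l - t) / (1 - t) := ⟨_, rfl⟩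
  have hrd : l - t = r * (1 - t) := by rw [hr, div_mul_cancel₀]; linarith
  have hr0 : 0 < r := by rw [hr]; apply div_pos <;> linarith
  have hr1 : r ≤ 1 := by rw [hr, div_le_one] <;> linarith
  have hG : GG l t ≤ GG l s + r * s / 2 * (s - t) := by
    have := mono_aux (f := fun v => GG l v + r * s / 2 * v) hts
      (fun x hx => (GG_deriv l x (ht.trans hx.1) (hx.2.trans_lt hs1)).add
        ((hasDerivAt_id x).const_mul (r * s / 2))) ?_
    · linarith
    intro x hx
    obtain ⟨hx1, hx2⟩ := hx
    have hx0 := ht.trans hx1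
    have hp := sq_pos_aux hx0 (hx2.trans_lt hs1)
    have e1 : l - x ≤ r * (1 - x) := by nlinarith
    have e2 : (l - x) * x ^ 2 / (1 - x ^ 2) ≤ r * s / 2 := by
      rw [div_le_iff₀ hp]
      calc (l - x) * x ^ 2 ≤ r * (1 - x) * x ^ 2 := by gcongr
        _ = r * (1 - x) * (x * x) := by ring
        _ ≤ r * (1 - x) * (s * ((1 + x) / 2)) := by
          apply mul_le_mul_of_nonneg_left _ (mul_nonneg hr0.le (by linarith))
          apply mul_le_mul hx2 (by linarith) hx0 hs
        _ = _ := by ring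
    have : (x - l) * x ^ 2 / (1 - x ^ 2) = - ((l - x) * x ^ 2 / (1 - x ^ 2)) := by ring
    rw [this]; linarith
  have hpt := sq_pos_aux ht ht1
  have hps := sq_pos_aux hs hs1
  obtain ⟨x, hx⟩ : ∃ x, x = Real.sqrt (1 - s ^ 2) / Real.sqrt (1 - t ^ 2) := ⟨_, rfl⟩
  have hx0 : 0 ≤ x := by rw [hx]; positivity
  have hxs : s ^ 2 - t ^ 2 = (1 - t ^ 2) * (1 - x ^ 2) := by
    rw [hx, div_pow, Real.sq_sqrt hpt.le, Real.sq_sqrt hps.le]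
    field_simp; ring
  have hx1 : x < 1 := by
    by_contra! hc
    have : (1 - t ^ 2) * (1 - x ^ 2) ≤ 0 := by
      apply mul_nonpos_of_nonneg_of_nonpos hpt.le; nlinarith
    nlinarith
  have hbr : 0 < 2 * t * (1 - t) * (1 - x) - (s - t) * (s + t - 1) := by
    rcases lt_or_ge (s + t - 1) 0 with h | h
    · have : 0 ≤ t * ((1 - t) * (1 - x)) :=
        mul_nonneg ht (mul_nonneg (by linarith) (by linarith))
      have : 0 < (s - t) * (1 - s - t) := mul_pos (by linarith) (by linarith)
      nlinarith
    · have hst : 0 < s + t := by linarith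
      have k1 : 0 < 2 * t * (s + t) - (1 + t) * (1 + x) * (s + t - 1) := by
        have : (1 + t) * (1 + x) * (s + t - 1) ≤ (1 + t) * 2 * (s + t - 1) := by
          apply mul_le_mul_of_nonneg_right _ h
          nlinarith
        nlinarith
      have k2 : (s + t) * (2 * t * (1 - t) * (1 - x) - (s - t) * (s + t - 1)) =
          (1 - t) * (1 - x) * (2 * t * (s + t) - (1 + t) * (1 + x) * (s + t - 1)) := by
        linear_combination (-(s + t - 1)) * hxs
      have k3 : 0 < (s + t) * (2 * t * (1 - t) * (1 - x) - (s - t) * (s + t - 1)) := by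
        rw [k2]
        exact mul_pos (mul_pos (by linarith) (by linarith)) k1
      exact (pos_iff_pos_of_mul_pos k3).1 hst
  unfold Ph
  rw [← hx]
  have k4 : r * (1 - t) * (s - t) ≤ (l - t) ^ 2 := by
    rw [← hrd, sq]
    exact mul_le_mul_of_nonneg_left (by linarith) (by linarith)
  have k5 : (l - t) * t * (1 - x) = r * (t * (1 - t) * (1 - x)) := by rw [hrd]; ring
  have k6 := mul_pos hr0 hbr
  nlinarith

lemma case_b' {l t s : ℝ} (ht : 0 ≤ t) (htl : t < l) (h1 : l < 1) (hls : l < s) (hs1 : s < 1) :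
    0 < Ph l t s + (1 / 2) * (t - l) ^ 2 := by
  have h := case_b ht htl h1 htl.le le_rfl
  have h2 := GG_min (ht.trans htl.le) h1 (ht.trans (htl.trans hls).le) hs1 hls.ne'
  have h3 : Real.sqrt (1 - s ^ 2) / Real.sqrt (1 - t ^ 2) ≤
      Real.sqrt (1 - l ^ 2) / Real.sqrt (1 - t ^ 2) := by
    gcongr
    linarith
  have h4 : 0 ≤ (l - t) * t := mul_nonneg (by linarith) ht
  have h5 := mul_le_mul_of_nonneg_left h3 h4
  unfold Ph at *
  nlinarith

lemma case_c {l t s : ℝ} (htl : t < l) (h1 : l < 1) (hs : 0 ≤ s) (hst : s < t)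
    (ht2 : t ^ 2 < 2 / 3) : 0 < Ph l t s + (1 / 2) * (t - l) ^ 2 := by
  have ht : 0 < t := hs.trans_lt hst
  have ht1 := htl.trans h1
  have hpt := sq_pos_aux ht.le ht1
  obtain ⟨K, hK⟩ : ∃ K, K = t / (1 - t ^ 2) := ⟨_, rfl⟩
  have hK0 : 0 < K := by rw [hK]; positivity
  have hKt : K * t < 2 := by
    rw [hK, div_mul_eq_mul_div, div_lt_iff₀ hpt]; nlinarith
  have key : ∀ v ∈ Icc s t, (pp t - pp v) ^ 2 ≤ K * (t - v) := by
    intro v hv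
    obtain ⟨hv1, hv2⟩ := hv
    have hv0 := hs.trans hv1
    have hpv := sq_pos_aux hv0 (hv2.trans_lt ht1)
    obtain ⟨b, hb⟩ : ∃ b, b = Real.sqrt (1 - v / t) := ⟨_, rfl⟩
    have hvt : v / t ≤ 1 := by rw [div_le_one ht]; exact hv2
    have hb2 : b ^ 2 = 1 - v / t := by rw [hb, Real.sq_sqrt]; linarith
    have hb0 : 0 ≤ b := by rw [hb]; positivity
    have hvt0 : 0 ≤ v / t := by positivity
    have hb1 : b ≤ 1 := by nlinarith
    have hveq : v = t * (1 - b ^ 2) := by rw [hb2]; field_simp; ring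
    have m1 := pp_mono hv0 hv2 ht1
    -- pp t - pp v ≤ pp t * b
    have m2 : pp t - pp v ≤ pp t * b := by
      have q : pp t * (1 - b) ≤ pp v := by
        unfold pp
        have c1 := Real.sqrt_pos.2 hpt
        have c2 := Real.sqrt_pos.2 hpv
        have c3 : Real.sqrt (1 - v ^ 2) ≤ Real.sqrt (1 - t ^ 2) * (1 + b) := by
          apply Real.sqrt_le_iff.2
          refine ⟨by positivity, ?_⟩
          rw [mul_pow, Real.sq_sqrt hpt.le, hveq]
          have p1 : 0 ≤ 2 - 3 * b + 2 * b ^ 3 := by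
            nlinarith [mul_nonneg hb0 (sq_nonneg (b - 7/10)), sq_nonneg (b - 7/10)]
          have p2 : 0 ≤ b * ((2 + b) - t ^ 2 * ((1 + b) ^ 2 * (2 - b))) := by
            apply mul_nonneg hb0
            have : t ^ 2 * ((1 + b) ^ 2 * (2 - b)) ≤ 2 / 3 * ((1 + b) ^ 2 * (2 - b)) := by
              apply mul_le_mul_of_nonneg_right ht2.le
              apply mul_nonneg (sq_nonneg _); linarith
            nlinarith
          nlinarith
        rw [div_mul_eq_mul_div, div_le_div_iff₀ c1 c2]
        calc t * (1 - b) * Real.sqrt (1 - v ^ 2)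
            ≤ t * (1 - b) * (Real.sqrt (1 - t ^ 2) * (1 + b)) := by
              apply mul_le_mul_of_nonneg_left c3
              apply mul_nonneg ht.le; linarith
          _ = v * Real.sqrt (1 - t ^ 2) := by rw [hveq]; ring
      linarith
    have m3 : (pp t - pp v) ^ 2 ≤ (pp t * b) ^ 2 := by
      apply pow_le_pow_left₀ _ m2; linarith
    refine m3.trans (le_of_eq ?_)
    rw [mul_pow, ← pp_sq ht.le ht1, hb2, hK]
    field_simp
  obtain ⟨δ, hδ⟩ : ∃ δ, δ = l - t := ⟨_, rfl⟩
  have hδ0 : 0 < δ := by linarith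
  have := mono_aux (f := fun v => - Ph l t v + δ ^ 2 * K / 4 * v) hst.le
      (fun x hx => ((Ph_deriv l t x (hs.trans hx.1) (hx.2.trans_lt ht1)).neg).add
        ((hasDerivAt_id x).const_mul (δ ^ 2 * K / 4))) ?_
  · rw [Ph_self l t ht.le ht1] at this
    have e1 : δ ^ 2 * K / 4 * (t - s) < δ ^ 2 / 2 := by
      have : K * (t - s) < 2 := by nlinarith
      have : δ ^ 2 * (K * (t - s)) < δ ^ 2 * 2 := by
        apply mul_lt_mul_of_pos_left this; positivity
      linarith
    have e2 : (t - l) ^ 2 = δ ^ 2 := by rw [hδ]; ring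
    rw [e2]; linarith
  intro v hv
  have k := key v hv
  have hp := pp_nonneg (hs.trans hv.1)
  have hl : l = δ + t := by linarith
  have : -((v - l) * pp v ^ 2 + (l - t) * pp t * pp v) + δ ^ 2 * K / 4 * 1 =
     (t - v) * pp v ^ 2 - δ * pp v * (pp t - pp v) + δ ^ 2 * K / 4 := by rw [hl]; ring
  rw [this]
  -- multiply by K
  have n1 : 0 ≤ K * ((t - v) * pp v ^ 2 - δ * pp v * (pp t - pp v) + δ ^ 2 * K / 4) := by
    have := mul_le_mul_of_nonneg_right k (sq_nonneg (pp v))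
    nlinarith [sq_nonneg (pp v * (pp t - pp v) - δ * K / 2)]
  exact nonneg_of_mul_nonneg_right n1 hK0

lemma N0 {t : ℝ} (h81 : 81 / 100 ≤ t) (ht1 : t < 1) :
    0 ≤ Ph 1 t 0 := by
  have hpt := sq_pos_aux (by linarith : 0 ≤ t) ht1
  have c := Real.sqrt_pos.2 hpt
  have hc2 := Real.sq_sqrt hpt.le
  set q := Real.sqrt (1 - t ^ 2) with hq
  have hlog : Real.log 2 - Real.log (1 + t) ≤ (2 / (1 + t) - (1 + t) / 2) / 2 := by
    have hu : 0 < 2 / (1 + t) := by apply div_pos <;> linarith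
    have h := Real.sinh_log hu
    have h2 : 0 ≤ Real.log (2 / (1 + t)) := by
      apply Real.log_nonneg
      rw [le_div_iff₀] <;> linarith
    have h3 := Real.self_le_sinh_iff.2 h2
    rw [h, inv_div, Real.log_div (by norm_num) (by linarith)] at h3
    exact h3
  have hl2 := Real.log_two_gt_d9
  obtain ⟨z, hz⟩ : ∃ z, z = (1 - t) / q := ⟨_, rfl⟩
  have hz2 : z ^ 2 = (1 - t) / (1 + t) := by
    rw [hz, div_pow, hc2]
    have e1 : 1 - t ^ 2 = (1 - t) * (1 + t) := by ring
    have : 1 - t ≠ 0 := by linarith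
    rw [e1]; field_simp
  have hz3 : z ≤ (31 / 100 + (1 - t) / (1 + t) / (31 / 100)) / 2 := by
    rw [← hz2]; nlinarith [sq_nonneg (z - 31 / 100)]
  have e0 : Ph 1 t 0 = Real.log (1 + t) - t ^ 2 / 2 - t * z := by
    unfold Ph GG
    rw [← hq, hz]
    simp
    field_simp
    ring
  have hz4 : t * z ≤ t * ((31 / 100 + (1 - t) / (1 + t) / (31 / 100)) / 2) :=
    mul_le_mul_of_nonneg_left hz3 (by linarith)
  have fin : 0 ≤ 0.693147 - (2 / (1 + t) - (1 + t) / 2) / 2 - t ^ 2 / 2 -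
      t * ((31 / 100 + (1 - t) / (1 + t) / (31 / 100)) / 2) := by
    have hp : 0 < 1 + t := by linarith
    have : 0.693147 - (2 / (1 + t) - (1 + t) / 2) / 2 - t ^ 2 / 2 -
      t * ((31 / 100 + (1 - t) / (1 + t) / (31 / 100)) / 2) =
      (0.693147 * (1 + t) - 1 + (1 + t) ^ 2 / 4 - t ^ 2 * (1 + t) / 2
        - t * (31 / 100 * (1 + t) + (1 - t) / (31 / 100)) / 2) / (1 + t) := by
      field_simp; ring
    rw [this]
    apply div_nonneg _ hp.le
    nlinarith [mul_nonneg (sub_nonneg.2 h81) (sub_nonneg.2 ht1.le),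
      mul_nonneg (mul_nonneg (sub_nonneg.2 h81) (sub_nonneg.2 ht1.le)) (sub_nonneg.2 h81),
      mul_nonneg (mul_nonneg (sub_nonneg.2 h81) (sub_nonneg.2 ht1.le)) (sub_nonneg.2 ht1.le)]
  rw [e0]
  linarith

lemma case_d {l t s : ℝ} (htl : t < l) (h1 : l < 1) (hs : 0 ≤ s) (hst : s < t)
    (ht2 : 2 / 3 ≤ t ^ 2) : 0 < Ph l t s + (1 / 2) * (t - l) ^ 2 := by
  have ht : 0 < t := hs.trans_lt hst
  have ht1 := htl.trans h1
  have hpt := sq_pos_aux ht.le ht1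
  have hN : 0 ≤ Ph 1 t s := by
    have dv : ∀ v, 0 ≤ v → v ≤ t → 
        (v - 1) * pp v ^ 2 + (1 - t) * pp t * pp v = 
          pp v * ((1 - t) * pp t - (1 - v) * pp v) := by intros; ring
    have cmp : ∀ v, 0 ≤ v → v ≤ t → ((1 - t) * pp t) ^ 2 - ((1 - v) * pp v) ^ 2 =
        (t - v) * (t - t ^ 2 + v * (1 - t ^ 2) - v ^ 2 * (1 + t)) / ((1 + t) * (1 + v)) := by
      intro v hv hvt
      have := sq_pos_aux hv (hvt.trans_lt ht1)
      rw [mul_pow, mul_pow, ← pp_sq ht.le ht1, ← pp_sq hv (hvt.trans_lt ht1)]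
      have e1 : 1 - t ^ 2 = (1 - t) * (1 + t) := by ring
      have e2 : 1 - v ^ 2 = (1 - v) * (1 + v) := by ring
      rw [e2, e1]
      have : 1 - v ≠ 0 := by linarith
      have : 1 - t ≠ 0 := by linarith
      field_simp
      ring
    rcases le_total (t - t ^ 2 + s * (1 - t ^ 2) - s ^ 2 * (1 + t)) 0 with h | h
    · have := mono_aux (f := fun v => - Ph 1 t v) hst.le
        (fun x hx => (Ph_deriv 1 t x (hs.trans hx.1) (hx.2.trans_lt ht1)).neg) ?_
      · simp only [Ph_self 1 t ht.le ht1] at this; linarith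
      intro v hv
      obtain ⟨hv1, hv2⟩ := hv
      have hv0 := hs.trans hv1
      rw [dv v hv0 hv2]
      have k : t - t ^ 2 + v * (1 - t ^ 2) - v ^ 2 * (1 + t) ≤ 0 := by
        have ha : 0 < t - t ^ 2 := by nlinarith
        have hs0 : 0 < s := by
          rcases hs.eq_or_lt with h' | h'
          · rw [← h'] at h; nlinarith
          · exact h'
        have e : s * (t - t ^ 2 + v * (1 - t ^ 2) - v ^ 2 * (1 + t)) =
          v * (t - t ^ 2 + s * (1 - t ^ 2) - s ^ 2 * (1 + t)) - (v - s) * (t - t ^ 2)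
            - (1 + t) * (v * s) * (v - s) := by ring
        have e2 : v * (t - t ^ 2 + s * (1 - t ^ 2) - s ^ 2 * (1 + t)) ≤ 0 :=
          mul_nonpos_of_nonneg_of_nonpos hv0 h
        have e3 : 0 ≤ (v - s) * (t - t ^ 2) := mul_nonneg (by linarith) ha.le
        have e4 : 0 ≤ (1 + t) * (v * s) * (v - s) := mul_nonneg (by positivity) (by linarith)
        by_contra! hc
        have := mul_pos hs0 hc
        linarith
      have : ((1 - t) * pp t) ^ 2 ≤ ((1 - v) * pp v) ^ 2 := by
        rw [← sub_nonpos, cmp v hv0 hv2]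
        apply div_nonpos_of_nonpos_of_nonneg _ (by positivity)
        exact mul_nonpos_of_nonneg_of_nonpos (by linarith) k
      have := abs_le_of_sq_le_sq' this (mul_nonneg (by linarith) (pp_nonneg hv0))
      have := mul_nonneg (pp_nonneg hv0) (sub_nonneg.2 this.2)
      linarith
    · have h80 : 81 / 100 ≤ t := by nlinarith
      refine (N0 h80 ht1).trans ?_
      apply mono_aux hs (fun x hx => (Ph_deriv 1 t x hx.1 (hx.2.trans_lt (hst.trans ht1))))
      intro v hv
      obtain ⟨hv1, hv2⟩ := hv
      have hv3 := hv2.trans hst.le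
      rw [dv v hv1 hv3]
      have k : 0 ≤ t - t ^ 2 + v * (1 - t ^ 2) - v ^ 2 * (1 + t) := by
        have ha : 0 < t - t ^ 2 := by nlinarith
        rcases hs.eq_or_lt with h' | hs0
        · have : v = 0 := by linarith
          rw [this]; nlinarith
        have e : s * (t - t ^ 2 + v * (1 - t ^ 2) - v ^ 2 * (1 + t)) =
          v * (t - t ^ 2 + s * (1 - t ^ 2) - s ^ 2 * (1 + t)) + (s - v) * (t - t ^ 2)
            + (1 + t) * (v * s) * (s - v) := by ring
        have e2 : 0 ≤ v * (t - t ^ 2 + s * (1 - t ^ 2) - s ^ 2 * (1 + t)) :=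
          mul_nonneg hv1 h
        have e3 : 0 ≤ (s - v) * (t - t ^ 2) := mul_nonneg (by linarith) ha.le
        have e4 : 0 ≤ (1 + t) * (v * s) * (s - v) := mul_nonneg (by positivity) (by linarith)
        exact nonneg_of_mul_nonneg_right (by rw [e]; linarith) hs0
      apply mul_nonneg (pp_nonneg hv1)
      rw [sub_nonneg]
      apply le_of_sq_le_sq _ (mul_nonneg (by linarith) (pp_nonneg ht.le))
      rw [← sub_nonneg, cmp v hv1 hv3]
      apply div_nonneg _ (by positivity)
      exact mul_nonneg (by linarith) k
  obtain ⟨r, hr⟩ : ∃ r, r = (l - t) / (1 - t) := ⟨_, rfl⟩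
  have hrd : l - t = r * (1 - t) := by rw [hr, div_mul_cancel₀]; linarith
  have hr0 : 0 < r := by rw [hr]; apply div_pos <;> linarith
  have hr1 : r ≤ 1 := by rw [hr, div_le_one] <;> linarith
  have := mono_aux (f := fun v => - (Ph l t v - r * Ph 1 t v)) hst.le
      (fun x hx => ((Ph_deriv l t x (hs.trans hx.1) (hx.2.trans_lt ht1)).sub 
        ((Ph_deriv 1 t x (hs.trans hx.1) (hx.2.trans_lt ht1)).const_mul r)).neg) ?_
  · simp only [Ph_self l t ht.le ht1, Ph_self 1 t ht.le ht1] at this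
    have := mul_nonneg hr0.le hN
    have : 0 < (t - l) ^ 2 := by apply sq_pos_of_neg; linarith
    linarith
  intro v hv
  obtain ⟨hv1, hv2⟩ := hv
  have e : -((v - l) * pp v ^ 2 + (l - t) * pp t * pp v - r * ((v - 1) * pp v ^ 2 + (1 - t) * pp t * pp v)) = (l - v - r * (1 - v)) * pp v ^ 2 := by
    rw [hrd]; ring
  rw [e]
  apply mul_nonneg _ (sq_nonneg _)
  nlinarith

lemma key_ineq {l t s : ℝ} (h0 : 0 ≤ l) (h1 : l < 1) (ht : 0 ≤ t) (ht1 : t < 1) (hs : 0 ≤ s)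
    (hs1 : s < 1) (hne : ¬ (s = l ∧ t = l)) : 0 < Ph l t s + (1 / 2) * (t - l) ^ 2 := by
  rcases lt_trichotomy t l with h | h | h
  · rcases lt_or_ge s t with h2 | h2
    · rcases lt_or_ge (t ^ 2) (2 / 3) with h3 | h3
      · exact case_c h h1 hs h2 h3
      · exact case_d h h1 hs h2 h3
    · rcases le_or_gt s l with h3 | h3
      · exact case_b ht h h1 h2 h3
      · exact case_b' ht h h1 h3 hs1
  · subst h
    have := GG_min h0 h1 hs hs1 (fun h => hne ⟨h, rfl⟩)
    unfold Ph
    nlinarith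
  · have := case_a h0 h.le ht1 hs hs1
    have : 0 < (t - l) ^ 2 := by apply sq_pos_of_pos; linarith
    linarith

/-! ### Construction of the class-KL function -/

lemma kl_of (a : ℕ → ℝ → ℝ) (hm : ∀ n, Monotone (a n)) (hle : ∀ n s, 0 ≤ s → a n s ≤ s)
    (hnn : ∀ n s, 0 ≤ a n s) (ha : ∀ s, Antitone (fun n => a n s))
    (ht : ∀ s, 0 ≤ s → Tendsto (fun n => a n s) atTop (nhds 0)) :
    ∃ β : ℝ → ℝ → ℝ, IsClassKL β ∧ ∀ s, 0 ≤ s → ∀ n : ℕ, a n s ≤ β s n := by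
  have hint : ∀ n s u v, 0 ≤ s → IntervalIntegrable (fun τ => a n (s * τ)) MeasureTheory.volume u v := by
    intro n s u v hs
    apply Monotone.intervalIntegrable
    exact fun x y hxy => hm n (mul_le_mul_of_nonneg_left hxy hs)
  obtain ⟨b, hb⟩ : ∃ b : ℕ → ℝ → ℝ, b = fun n s => ∫ τ in (1:ℝ)..2, a n (s * τ) := ⟨_, rfl⟩
  have hb_lower : ∀ n s, 0 ≤ s → a n s ≤ b n s := by
    intro n s hs
    have := intervalIntegral.integral_mono_on (μ := MeasureTheory.volume) (a := 1) (b := 2) (f := fun _ => a n s)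
      (g := fun τ => a n (s * τ)) (by norm_num) (by simp) (hint n s 1 2 hs)
      (fun x hx => hm n (by nlinarith [hx.1]))
    rw [hb]
    simpa [show (2:ℝ) - 1 = 1 by norm_num] using this
  have hb_upper : ∀ n s, 0 ≤ s → b n s ≤ a n (s * 2) := by
    intro n s hs
    have := intervalIntegral.integral_mono_on (μ := MeasureTheory.volume) (a := 1) (b := 2) (g := fun _ => a n (s * 2))
      (f := fun τ => a n (s * τ)) (by norm_num) (hint n s 1 2 hs) (by simp) 
      (fun x hx => hm n (by nlinarith [hx.2]))
    rw [hb]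
    simpa [show (2:ℝ) - 1 = 1 by norm_num] using this
  have hb_nn : ∀ n s, 0 ≤ s → 0 ≤ b n s := fun n s hs => (hnn n s).trans (hb_lower n s hs)
  have hb_mono : ∀ n, MonotoneOn (b n) (Ici 0) := by
    intro n s hs s' hs' hss
    simp only [mem_Ici] at hs hs'
    rw [hb]
    exact intervalIntegral.integral_mono_on (by norm_num) (hint n s 1 2 hs) (hint n s' 1 2 hs')
      (fun x hx => hm n (by nlinarith [hx.1]))
  have hb_anti : ∀ s, 0 ≤ s → Antitone (fun n => b n s) := by
    intro s hs n m hnm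
    simp only [hb]
    exact intervalIntegral.integral_mono_on (by norm_num) (hint m s 1 2 hs) (hint n s 1 2 hs)
      (fun x hx => ha _ hnm)
  have hb0 : ∀ n, b n 0 = 0 := by
    intro n
    apply le_antisymm _ (hb_nn n 0 le_rfl)
    have := hb_upper n 0 le_rfl
    have h2 := hle n 0 le_rfl
    rw [zero_mul] at this
    linarith
  have hb_cont : ∀ n, ContinuousOn (b n) (Ici 0) := by
    intro n s hs
    rcases (mem_Ici.1 hs).eq_or_lt with h | h
    · subst h
      have l : Tendsto (fun s : ℝ => s * 2) (nhdsWithin 0 (Ici 0)) (nhds 0) := by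
        have : Continuous (fun s : ℝ => s * 2) := by fun_prop
        have := this.tendsto 0
        rw [zero_mul] at this
        exact this.mono_left nhdsWithin_le_nhds
      unfold ContinuousWithinAt
      rw [hb0]
      apply tendsto_of_tendsto_of_tendsto_of_le_of_le' tendsto_const_nhds l
      · filter_upwards [self_mem_nhdsWithin] with x hx using hb_nn n x hx
      · filter_upwards [self_mem_nhdsWithin] with x hx
        have hx : (0:ℝ) ≤ x := hx
        exact (hb_upper n x hx).trans (hle n _ (by linarith))
    · apply ContinuousAt.continuousWithinAt
      have hA : Continuous (fun x => ∫ τ in (0:ℝ)..x, a n τ) :=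
        intervalIntegral.continuous_primitive (fun u v => (hm n).intervalIntegrable) 0
      have hc : ContinuousAt (fun x : ℝ => x⁻¹ * ((∫ τ in (0:ℝ)..(x * 2), a n τ) - ∫ τ in (0:ℝ)..(x * 1), a n τ)) s := by
        have c1 : Continuous (fun x : ℝ => ∫ τ in (0:ℝ)..(x * 2), a n τ) := 
          hA.comp (continuous_id.mul continuous_const)
        have c2 : Continuous (fun x : ℝ => ∫ τ in (0:ℝ)..(x * 1), a n τ) := 
          hA.comp (continuous_id.mul continuous_const)
        exact (continuousAt_inv₀ h.ne').mul (c1.sub c2).continuousAt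
      apply hc.congr
      filter_upwards [lt_mem_nhds h] with x hx
      simp only [hb]
      rw [intervalIntegral.integral_comp_mul_left (a n) hx.ne', smul_eq_mul,
        intervalIntegral.integral_interval_sub_left (hm n).intervalIntegrable (hm n).intervalIntegrable]
  have hb_lim : ∀ s, 0 ≤ s → Tendsto (fun n => b n s) atTop (nhds 0) := fun s hs =>
    tendsto_of_tendsto_of_tendsto_of_le_of_le tendsto_const_nhds (ht (s * 2) (by linarith))
      (fun n => hb_nn n s hs) (fun n => hb_upper n s hs)
  refine ⟨fun s t => b ⌊t⌋₊ s + s / (1 + t), ⟨?_, ?_, ?_, ?_, ?_, ?_⟩, ?_⟩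
  · intro s t hs ht
    have := hb_nn ⌊t⌋₊ s hs
    positivity
  · intro t ht
    exact (hb_cont _).add (continuousOn_id.div_const _)
  · intro t ht s hs s' hs' hss
    have := hb_mono ⌊t⌋₊ hs hs' hss.le
    have : s / (1 + t) < s' / (1 + t) := by
      apply div_lt_div_of_pos_right hss; linarith
    simp only
    linarith
  · intro t ht
    simp [hb0]
  · intro s hs t ht t' ht' htt
    have ht : (0:ℝ) ≤ t := ht
    have h1 := hb_anti s hs (Nat.floor_mono htt)
    have : s / (1 + t') ≤ s / (1 + t) := by
      apply div_le_div_of_nonneg_left hs <;> linarith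
    simp only at h1 ⊢
    linarith
  · intro s hs
    have h1 := (hb_lim s hs).comp (tendsto_nat_floor_atTop (α := ℝ))
    have h2 : Tendsto (fun t : ℝ => s / (1 + t)) atTop (nhds 0) :=
      (tendsto_atTop_add_const_left atTop 1 tendsto_id).const_div_atTop s
    simpa using h1.add h2
  · intro s hs n
    simp only [Nat.floor_natCast]
    have := hb_lower n s hs
    have : 0 ≤ s / (1 + (n:ℝ)) := by positivity
    linarith

/-! ### Geometry -/

lemma e_apply (d : ℕ) (i j : Fin (d + 2)) : (e d i) j = if j = i then 1 else 0 := by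
  simp [e]

lemma DR_eq (d : ℕ) (l : ℝ) (x : Euc d) : DR d l x = (1 - 1 / ‖x‖) • x +
    (x 0 / ‖x‖ - (1 - 1 / ‖x‖) * x 0) • e d 0 + l • e d 1 := by
  have hsum : ∀ j, (∑ k ∈ Finset.univ.filter (fun k : Fin (d + 2) => 2 ≤ (k : ℕ)),
      ((1 - 1 / ‖x‖) * x k) • e d k) j = if 2 ≤ (j : ℕ) then (1 - 1 / ‖x‖) * x j else 0 := by
    intro j
    simp [e_apply, Finset.sum_ite_eq, WithLp.ofLp_sum, Finset.sum_apply]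
  ext j
  unfold DR
  simp only [PiLp.add_apply, PiLp.smul_apply, smul_eq_mul, hsum, e_apply]
  rcases eq_or_ne j 0 with h | h
  · subst h; simp
  rcases eq_or_ne j 1 with h' | h'
  · subst h'; simp
  · have : 2 ≤ (j : ℕ) := by
      have h1 : (j : ℕ) ≠ 0 := fun hh => h (Fin.ext hh)
      have h2 : (j : ℕ) ≠ 1 := fun hh => h' (Fin.ext (by simpa using hh))
      omega
    simp [h, h', this]

lemma inner_e (d : ℕ) (x : Euc d) (j : Fin (d + 2)) : inner ℝ x (e d j) = x j := by
  unfold e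
  rw [EuclideanSpace.inner_single_right]
  simp

lemma norm_e (d : ℕ) (j : Fin (d + 2)) : ‖e d j‖ = 1 := by simp [e]

lemma norm_shift (d : ℕ) (l : ℝ) (y : Euc d) :
    ‖y - l • e d 1‖ ^ 2 = ‖y‖ ^ 2 - 2 * l * y 1 + l ^ 2 := by
  rw [norm_sub_sq_real, inner_smul_right, inner_e, norm_smul, norm_e]
  simp; ring

lemma two_le (d : ℕ) (y : Euc d) : y 0 ^ 2 + y 1 ^ 2 ≤ ‖y‖ ^ 2 := by
  rw [EuclideanSpace.norm_sq_eq]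
  simp only [Real.norm_eq_abs, sq_abs]
  rw [Fin.sum_univ_succ, Fin.sum_univ_succ]
  have : 0 ≤ ∑ i : Fin d, y (i.succ.succ) ^ 2 := Finset.sum_nonneg (fun i _ => sq_nonneg _)
  have h1 : (Fin.succ 0 : Fin (d + 2)) = 1 := rfl
  rw [h1]
  linarith

lemma DR_zero (d : ℕ) (l : ℝ) (x : Euc d) : (DR d l x) 0 = x 0 / ‖x‖ := by
  rw [DR_eq]
  simp [e_apply]

lemma norm_pos_of (d : ℕ) {x : Euc d} (hx : 0 < x 0) : 0 < ‖x‖ := by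
  rw [norm_pos_iff]; rintro rfl; simp at hx

lemma DR_mem (d : ℕ) (l : ℝ) {x : Euc d} (hx : 0 < x 0) : DR d l x ∈ Delta d := by
  have hr := norm_pos_of d hx
  refine ⟨?_, ?_⟩
  · rw [DR_zero]; positivity
  · rw [DR_zero, div_le_one hr]
    have := two_le d x
    apply le_of_sq_le_sq _ hr.le
    nlinarith [sq_nonneg (x 1)]

lemma DR_norm (d : ℕ) (l : ℝ) {x : Euc d} (hx : 0 < x 0) :
    ‖DR d l x - l • e d 1‖ ^ 2 = (x 0 / ‖x‖) ^ 2 + (1 - 1 / ‖x‖) ^ 2 * (‖x‖ ^ 2 - x 0 ^ 2) := by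
  have hr := norm_pos_of d hx
  rw [DR_eq, add_sub_cancel_right, norm_add_sq_real, inner_smul_left, inner_smul_right, inner_e,
    norm_smul, norm_smul, norm_e, mul_pow, mul_pow, Real.norm_eq_abs, Real.norm_eq_abs, sq_abs,
    sq_abs]
  simp
  ring

lemma F_eq (d : ℕ) (l : ℝ) {y : Euc d} (hy : y ∈ Delta d) :
    F d l y = (1 / 2) * (‖y - l • e d 1‖ ^ 2 - y 0 ^ 2) + GG l (Real.sqrt (1 - y 0 ^ 2)) := by
  obtain ⟨h0, h1⟩ := hy
  have hp : 0 ≤ 1 - y 0 ^ 2 := by nlinarith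
  have hs2 := Real.sq_sqrt hp
  have hs0 := Real.sqrt_nonneg (1 - y 0 ^ 2)
  unfold F GG
  set s := Real.sqrt (1 - y 0 ^ 2)
  have hs1 : s < 1 := by nlinarith [sq_pos_of_pos h0]
  have hlog : Real.log (y 0) = (Real.log (1 + s) + Real.log (1 - s)) / 2 := by
    rw [← Real.log_mul (by linarith) (by linarith)]
    have : (1 + s) * (1 - s) = y 0 ^ 2 := by nlinarith
    rw [this, Real.log_pow]; push_cast; ring
  rw [hlog, hs2]
  ring

lemma xStar_zero (d : ℕ) (l : ℝ) : (xStar d l) 0 = Real.sqrt (1 - l ^ 2) := by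
  simp [xStar, e_apply]

lemma xStar_mem (d : ℕ) {l : ℝ} (h0 : 0 ≤ l) (h1 : l < 1) : xStar d l ∈ Delta d := by
  have := sq_pos_aux h0 h1
  refine ⟨?_, ?_⟩
  · rw [xStar_zero]; exact Real.sqrt_pos.2 this
  · rw [xStar_zero]; exact Real.sqrt_le_one.2 (by nlinarith)

lemma F_xStar (d : ℕ) {l : ℝ} (h0 : 0 ≤ l) (h1 : l < 1) : F d l (xStar d l) = GG l l := by
  have := sq_pos_aux h0 h1
  rw [F_eq d l (xStar_mem d h0 h1), xStar_zero, Real.sq_sqrt this.le]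
  have e1 : xStar d l - l • e d 1 = Real.sqrt (1 - l ^ 2) • e d 0 := by
    unfold xStar; rw [add_sub_cancel_right]
  rw [e1, norm_smul, norm_e, mul_one, Real.norm_eq_abs, sq_abs, Real.sq_sqrt this.le, sub_sub_cancel,
    Real.sqrt_sq h0]
  ring

lemma F_ge (d : ℕ) {l : ℝ} (h0 : 0 ≤ l) (h1 : l < 1) {y : Euc d} (hy : y ∈ Delta d) :
    F d l (xStar d l) ≤ F d l y := by
  rw [F_xStar d h0 h1, F_eq d l hy, norm_shift]
  have h2 := two_le d y
  have h3 : GG l l ≤ GG l (Real.sqrt (1 - y 0 ^ 2)) := by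
    by_cases h : Real.sqrt (1 - y 0 ^ 2) = l
    · rw [h]
    · refine (GG_min h0 h1 (Real.sqrt_nonneg _) ?_ h).le
      rw [Real.sqrt_lt' one_pos]
      nlinarith [sq_pos_of_pos hy.1]
  nlinarith [sq_nonneg (y 1 - l)]

lemma F_diff (d : ℕ) {l : ℝ} (h0 : 0 ≤ l) (h1 : l < 1) {y : Euc d} (hy : y ∈ Delta d) :
    F d l (DR d l y) ≤ F d l y ∧ (y ≠ xStar d l → F d l (DR d l y) < F d l y) := by
  have hy0 := hy.1
  have hy1 := hy.2
  have hr := norm_pos_of d hy0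
  have h2 := two_le d y
  rw [F_eq d l hy, F_eq d l (DR_mem d l hy0), norm_shift d l y, DR_norm d l hy0, DR_zero]
  obtain ⟨r, hrr⟩ : ∃ r, r = ‖y‖ := ⟨_, rfl⟩
  obtain ⟨ρ, hρ⟩ : ∃ ρ, ρ = Real.sqrt (r ^ 2 - y 0 ^ 2) := ⟨_, rfl⟩
  rw [← hrr] at hr h2 ⊢
  have hρ2 : ρ ^ 2 = r ^ 2 - y 0 ^ 2 := by
    rw [hρ, Real.sq_sqrt]; nlinarith [sq_nonneg (y 1)]
  have hρ0 : 0 ≤ ρ := by rw [hρ]; positivity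
  have hyρ : y 1 ≤ ρ := by apply le_of_sq_le_sq _ hρ0; linarith
  obtain ⟨t, ht⟩ : ∃ t, t = ρ / r := ⟨_, rfl⟩
  obtain ⟨s, hs⟩ : ∃ s, s = Real.sqrt (1 - y 0 ^ 2) := ⟨_, rfl⟩
  have ht0 : 0 ≤ t := by rw [ht]; positivity
  have ht2 : 1 - t ^ 2 = (y 0 / r) ^ 2 := by
    rw [ht, div_pow, div_pow, hρ2]; field_simp; ring
  have ht1 : t < 1 := by
    have : 0 < (y 0 / r) ^ 2 := by positivity
    nlinarith
  have hts : Real.sqrt (1 - (y 0 / r) ^ 2) = t := by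
    rw [← ht2, sub_sub_cancel, Real.sqrt_sq ht0]
  have hs0 : 0 ≤ s := by rw [hs]; positivity
  have hs2 : s ^ 2 = 1 - y 0 ^ 2 := by rw [hs, Real.sq_sqrt]; nlinarith
  have hs1 : s < 1 := by nlinarith [sq_pos_of_pos hy0]
  rw [hts, ← hs, ← hρ2]
  have hc : Real.sqrt (1 - s ^ 2) = y 0 := by rw [hs2, sub_sub_cancel, Real.sqrt_sq hy0.le]
  have hc' : Real.sqrt (1 - t ^ 2) = y 0 / r := by
    rw [ht2, Real.sqrt_sq]; positivity
  have htr : ρ = t * r := by rw [ht]; field_simp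
  have hPh : Ph l t s = GG l s - GG l t + (l - t) * (t - ρ) := by
    unfold Ph
    rw [hc, hc', htr]
    field_simp
  have hrt : (1 - 1 / r) ^ 2 * ρ ^ 2 = (ρ - t) ^ 2 := by
    rw [ht]; field_simp
  rw [hrt]
  have hdiff : (1 / 2) * (r ^ 2 - 2 * l * y 1 + l ^ 2 - y 0 ^ 2) + GG l s
    - ((1 / 2) * ((y 0 / r) ^ 2 + (ρ - t) ^ 2 - (y 0 / r) ^ 2) + GG l t)
    = (Ph l t s + (1 / 2) * (t - l) ^ 2) + l * (ρ - y 1) := by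
    rw [hPh]; linear_combination (-1 / 2) * hρ2
  have hlr : 0 ≤ l * (ρ - y 1) := mul_nonneg h0 (by linarith)
  by_cases hdeg : s = l ∧ t = l
  · obtain ⟨hsl, htl⟩ := hdeg
    have hr1 : r = 1 := by
      have : (y 0 / r) = y 0 := by rw [← hc', ← hc, hsl, htl]
      field_simp at this
      nlinarith
    have hk : (Ph l t s + (1 / 2) * (t - l) ^ 2) = 0 := by
      rw [hsl, htl, Ph_self l l h0 h1]; ring
    rw [hk] at hdiff
    refine ⟨by linarith, fun hne => ?_⟩
    have hpos : 0 < ‖y - xStar d l‖ ^ 2 := by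
      have : 0 < ‖y - xStar d l‖ := norm_pos_iff.2 (sub_ne_zero.2 hne)
      positivity
    have hyl : Real.sqrt (1 - l ^ 2) = y 0 := by rw [← hc, hsl]
    have hx : ‖y - xStar d l‖ ^ 2 = 2 * (l * (ρ - y 1)) := by
      have e1 : y - xStar d l = (y - l • e d 1) - y 0 • e d 0 := by
        unfold xStar; rw [hyl]; abel
      rw [e1, norm_sub_sq_real, norm_shift, inner_smul_right, inner_e, norm_smul, norm_e, ← hrr]
      simp [e_apply]
      have : ρ = l := by rw [htr, hr1, htl]; ring
      rw [this, hr1]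
      rw [hsl] at hs2
      linear_combination (-1) * hs2
    linarith
  · have := key_ineq h0 h1 ht0 ht1 hs0 hs1 hdeg
    refine ⟨by linarith, fun _ => by linarith⟩

/-! ### Continuity, coercivity -/

lemma DR_cont (d : ℕ) (l : ℝ) : ContinuousOn (DR d l) (Hplus d) := by
  have : DR d l = fun x => (1 - 1 / ‖x‖) • x +
    (x 0 / ‖x‖ - (1 - 1 / ‖x‖) * x 0) • e d 0 + l • e d 1 := funext (DR_eq d l)
  rw [this]
  have hne : ∀ x ∈ Hplus d, ‖x‖ ≠ 0 := fun x hx => (norm_pos_of d hx).ne'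
  fun_prop (disch := assumption)

lemma F_cont (d : ℕ) (l : ℝ) : ContinuousOn (F d l) (Hplus d) := by
  unfold F
  have hne : ∀ x ∈ Hplus d, x 0 ≠ 0 := fun x hx => (ne_of_gt hx)
  have hne2 : ∀ x ∈ Hplus d, 1 + Real.sqrt (1 - x 0 ^ 2) ≠ 0 := fun x hx => by positivity
  fun_prop (disch := assumption)

lemma F_coercive (d : ℕ) {l : ℝ} (h0 : 0 ≤ l) (h1 : l < 1) (b : ℝ) :
    ∃ m M : ℝ, 0 < m ∧ ∀ y ∈ Delta d, F d l y ≤ b → m ≤ y 0 ∧ ‖y - l • e d 1‖ ≤ M := by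
  refine ⟨Real.exp (-(b + Real.log 2) / (1 - l)), 2 * (b + Real.log 2) + 1, Real.exp_pos _, ?_⟩
  intro y hy hF
  obtain ⟨hy0, hy1⟩ := hy
  unfold F at hF
  have hq0 := Real.sqrt_nonneg (1 - y 0 ^ 2)
  have hq1 : Real.sqrt (1 - y 0 ^ 2) ≤ 1 := Real.sqrt_le_one.2 (by nlinarith)
  have hlog : Real.log (1 + Real.sqrt (1 - y 0 ^ 2)) ≤ Real.log 2 :=
    Real.log_le_log (by positivity) (by linarith)
  have hl2 : 0 ≤ Real.log 2 := Real.log_nonneg (by norm_num)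
  have h3 : l * Real.log (1 + Real.sqrt (1 - y 0 ^ 2)) ≤ Real.log 2 := by
    calc _ ≤ l * Real.log 2 := by gcongr
      _ ≤ 1 * Real.log 2 := by gcongr
      _ = _ := one_mul _
  have h4 : 0 ≤ l * Real.sqrt (1 - y 0 ^ 2) := by positivity
  have h5 : Real.log (y 0) ≤ 0 := Real.log_nonpos hy0.le hy1
  have h6 : 0 ≤ (l - 1) * Real.log (y 0) := mul_nonneg_of_nonpos_of_nonpos (by linarith) h5
  have h7 := sq_nonneg ‖y - l • e d 1‖
  constructor
  · rw [← Real.le_log_iff_exp_le hy0, div_le_iff₀ (by linarith)]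
    linarith
  · nlinarith [sq_nonneg (‖y - l • e d 1‖ - 1)]

lemma unif_decrease (d : ℕ) {l : ℝ} (h0 : 0 ≤ l) (h1 : l < 1) (b ε : ℝ) (hε : 0 < ε) :
    ∃ η : ℝ, 0 < η ∧ ∀ y ∈ Delta d, F d l (xStar d l) + ε ≤ F d l y → F d l y ≤ b →
      F d l (DR d l y) + η ≤ F d l y := by
  obtain ⟨m, M, hm, hM⟩ := F_coercive d h0 h1 b
  obtain ⟨K, hK⟩ : ∃ K : Set (Euc d), K = closedBall (l • e d 1) M ∩ {y | m ≤ y 0 ∧ y 0 ≤ 1} :=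
    ⟨_, rfl⟩
  have hKc : IsCompact K := by
    rw [hK]
    apply (isCompact_closedBall _ _).inter_right
    apply IsClosed.and
    · exact isClosed_le continuous_const (by fun_prop)
    · exact isClosed_le (by fun_prop) continuous_const
  have hKH : K ⊆ Hplus d := fun y hy => by
    rw [hK] at hy
    exact hm.trans_le hy.2.1
  have hKD : K ⊆ Delta d := fun y hy => ⟨hKH hy, by rw [hK] at hy; exact hy.2.2⟩
  have hFK := (F_cont d l).mono hKH
  have hL : IsCompact (K ∩ F d l ⁻¹' (Ici (F d l (xStar d l) + ε))) :=
    hKc.of_isClosed_subset (hFK.preimage_isClosed_of_isClosed hKc.isClosed isClosed_Ici)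
      inter_subset_left
  have hg : ContinuousOn (fun y => F d l y - F d l (DR d l y))
      (K ∩ F d l ⁻¹' (Ici (F d l (xStar d l) + ε))) := by
    apply (hFK.mono inter_subset_left).sub
    apply (F_cont d l).comp ((DR_cont d l).mono (inter_subset_left.trans hKH))
    intro y hy
    exact (DR_mem d l (hKH hy.1)).1
  have hmem : ∀ y ∈ Delta d, F d l (xStar d l) + ε ≤ F d l y → F d l y ≤ b →
      y ∈ K ∩ F d l ⁻¹' (Ici (F d l (xStar d l) + ε)) := by
    intro y hy h2 h3
    refine ⟨?_, h2⟩
    rw [hK]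
    obtain ⟨a1, a2⟩ := hM y hy h3
    exact ⟨by rw [mem_closedBall, dist_eq_norm]; exact a2, a1, hy.2⟩
  rcases (K ∩ F d l ⁻¹' (Ici (F d l (xStar d l) + ε))).eq_empty_or_nonempty with he | hne
  · refine ⟨1, one_pos, fun y hy h2 h3 => ?_⟩
    have := hmem y hy h2 h3
    rw [he] at this
    exact this.elim
  · obtain ⟨z, hz, hzm⟩ := hL.exists_isMinOn hne hg
    refine ⟨F d l z - F d l (DR d l z), ?_, fun y hy h2 h3 => ?_⟩
    · rw [sub_pos]
      apply (F_diff d h0 h1 (hKD hz.1)).2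
      intro h
      have := hz.2
      simp only [mem_preimage, mem_Ici, h] at this
      linarith
    · have := hzm (hmem y hy h2 h3)
      simp only [Set.mem_ofPred_eq] at this
      linarith

lemma iter_mem (d : ℕ) (l : ℝ) {y : Euc d} (hy : y ∈ Delta d) (n : ℕ) :
    (DR d l)^[n] y ∈ Delta d := by
  induction n with
  | zero => exact hy
  | succ n ih => rw [Function.iterate_succ_apply']; exact DR_mem d l ih.1

lemma iter_anti (d : ℕ) {l : ℝ} (h0 : 0 ≤ l) (h1 : l < 1) {y : Euc d} (hy : y ∈ Delta d) :
    Antitone (fun n => F d l ((DR d l)^[n] y)) := by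
  apply antitone_nat_of_succ_le
  intro n
  rw [Function.iterate_succ_apply']
  exact (F_diff d h0 h1 (iter_mem d l hy n)).1

lemma unif_attr (d : ℕ) {l : ℝ} (h0 : 0 ≤ l) (h1 : l < 1) (b ε : ℝ) (hε : 0 < ε) :
    ∃ N : ℕ, ∀ n ≥ N, ∀ y ∈ Delta d, F d l y ≤ b →
      F d l ((DR d l)^[n] y) ≤ F d l (xStar d l) + ε := by
  obtain ⟨η, hη, hd⟩ := unif_decrease d h0 h1 b ε hε
  obtain ⟨N, hN⟩ := exists_nat_gt ((b - F d l (xStar d l)) / η)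
  refine ⟨N, fun n hn y hy hb => (iter_anti d h0 h1 hy hn).trans ?_⟩
  by_contra! hc
  have claim : ∀ k ≤ N, F d l ((DR d l)^[k] y) + k * η ≤ b := by
    intro k hk
    induction k with
    | zero => simpa using hb
    | succ k ih =>
      have ih := ih (by omega)
      have a1 := iter_anti d h0 h1 hy (show k ≤ N by omega)
      have a2 := iter_anti d h0 h1 hy (Nat.zero_le k)
      simp only [Function.iterate_zero, id] at a1 a2
      have := hd _ (iter_mem d l hy k) (hc.le.trans a1) (a2.trans hb)
      rw [Function.iterate_succ_apply']
      push_cast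
      linarith
  have h3 := claim N le_rfl
  rw [div_lt_iff₀ hη] at hN
  linarith

/-- For `λ ∈ [0,1)` there is a class-`KL` function `β` such that for every
`x ∈ H₊` and every `n ∈ ℕ`, `V(T^n x) ≤ β(V(x), n)`. -/
theorem stmt15 (d : ℕ) (lam : ℝ) (h0 : 0 ≤ lam) (h1 : lam < 1) :
    ∃ β : ℝ → ℝ → ℝ, IsClassKL β ∧
      ∀ x ∈ Hplus d, ∀ n : ℕ, V d lam ((DR d lam)^[n] x) ≤ β (V d lam x) n := by
  obtain ⟨S, hS⟩ : ∃ S : ℕ → ℝ → Set ℝ, S = fun n s => {w | ∃ y ∈ Delta d,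
    F d lam y - F d lam (xStar d lam) ≤ s ∧
      w = F d lam ((DR d lam)^[n] y) - F d lam (xStar d lam)} := ⟨_, rfl⟩
  have hle : ∀ n s, ∀ w ∈ S n s, w ≤ s := by
    intro n s w hw
    rw [hS] at hw
    obtain ⟨y, hy, h2, rfl⟩ := hw
    have := iter_anti d h0 h1 hy (Nat.zero_le n)
    simp only [Function.iterate_zero, id] at this
    linarith
  have hbdd : ∀ n s, BddAbove (S n s) := fun n s => ⟨s, hle n s⟩
  have hnn : ∀ n s, ∀ w ∈ S n s, 0 ≤ w := by
    intro n s w hw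
    rw [hS] at hw
    obtain ⟨y, hy, h2, rfl⟩ := hw
    have := F_ge d h0 h1 (iter_mem d lam hy n)
    linarith
  have hsn : ∀ n s, 0 ≤ sSup (S n s) := fun n s => Real.sSup_nonneg (hnn n s)
  have q1 : ∀ n, Monotone (fun s => sSup (S n s)) := by
    intro n s s' hss
    apply Real.sSup_le _ (hsn n s')
    intro w hw
    apply le_csSup (hbdd _ _)
    rw [hS] at hw ⊢
    obtain ⟨y, hy, h2, rfl⟩ := hw
    exact ⟨y, hy, h2.trans hss, rfl⟩
  have q2 : ∀ n s, 0 ≤ s → sSup (S n s) ≤ s := by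
    intro n s hs
    exact Real.sSup_le (hle n s) hs
  have q3 : ∀ s, Antitone (fun n => sSup (S n s)) := by
    intro s n m hnm
    apply Real.sSup_le _ (hsn n s)
    intro w hw
    rw [hS] at hw
    obtain ⟨y, hy, h2, rfl⟩ := hw
    refine le_trans ?_ (le_csSup (hbdd n s) (a := F d lam ((DR d lam)^[n] y) - F d lam (xStar d lam)) ?_)
    · have := iter_anti d h0 h1 hy hnm
      simp only at this
      linarith
    · rw [hS]; exact ⟨y, hy, h2, rfl⟩
  have q4 : ∀ s, 0 ≤ s → Tendsto (fun n => sSup (S n s)) atTop (nhds 0) := by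
    intro s hs
    rw [Metric.tendsto_atTop]
    intro ε hε
    obtain ⟨N, hN⟩ := unif_attr d h0 h1 (s + F d lam (xStar d lam)) (ε / 2) (by linarith)
    refine ⟨N, fun n hn => ?_⟩
    rw [Real.dist_eq, sub_zero, abs_of_nonneg (hsn n s)]
    refine lt_of_le_of_lt (Real.sSup_le ?_ (by linarith : 0 ≤ ε / 2)) (by linarith)
    intro w hw
    rw [hS] at hw
    obtain ⟨y, hy, h2, rfl⟩ := hw
    have := hN n hn y hy (by linarith)
    linarith
  obtain ⟨β, hβ, hle'⟩ := kl_of (fun n s => sSup (S n s)) q1 q2 hsn q3 q4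
  refine ⟨β, hβ, fun x hx n => ?_⟩
  have hm := DR_mem d lam hx
  have hV : 0 ≤ V d lam x := by
    have := F_ge d h0 h1 hm
    unfold V; linarith
  refine le_trans ?_ (hle' _ hV n)
  apply le_csSup (hbdd _ _)
  rw [hS]
  refine ⟨DR d lam x, hm, le_rfl, ?_⟩
  unfold V
  rw [← Function.iterate_succ_apply' (DR d lam) n x, Function.iterate_succ_apply]
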